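/- Let P be a respecting forest of order 2, let X = {ξ₁ < ⋯ < ξ_m} be the isominimal realization of P in ℛ₂, and let c be any covering of P into ℛ₂ with image {γ₁ < ⋯ < γ_m}. Then ξ_k ≤ γ_k for all k = 1, …, m; i.e., the isominimal realization is pointwise minimal among all covers of P. -/

import Mathlib

open FirstOrder

/-- The relation symbols of the language of `ℛ₂`: three binary relations. -/
inductive ordRel : ℕ → Type
  | le : ordRel 2
  | le1 : ordRel 2
  | le2 : ordRel 2

/-- The first-order language with three binary relation symbols `≤`, `≤₁`, `≤₂`. -/
def ordLang : FirstOrder.Language := ⟨fun _ => Empty, ordRel⟩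

/-- The `ordLang`-structure on the set of ordinals below `β`, interpreting the three
relation symbols by `≤` and the given relations `le1`, `le2`. -/
def segStr (le1 le2 : Ordinal → Ordinal → Prop) (β : Ordinal) :
    ordLang.Structure {x : Ordinal // x < β} where
  funMap := fun f => Empty.elim f
  RelMap
    | .le => fun v => (v 0).1 ≤ (v 1).1
    | .le1 => fun v => le1 (v 0).1 (v 1).1
    | .le2 => fun v => le2 (v 0).1 (v 1).1

/-- Σ₁-formulas: a block of existential quantifiers applied to a quantifier-free formula. -/
inductive IsSigma1 {L : FirstOrder.Language} {α : Type} :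
    {n : ℕ} → L.BoundedFormula α n → Prop
  | of_isQF {n} {φ : L.BoundedFormula α n} (h : φ.IsQF) : IsSigma1 φ
  | ex {n} {φ : L.BoundedFormula α (n + 1)} (h : IsSigma1 φ) : IsSigma1 φ.ex

/-- Π₁-formulas: a block of universal quantifiers applied to a quantifier-free formula. -/
inductive IsPi1 {L : FirstOrder.Language} {α : Type} :
    {n : ℕ} → L.BoundedFormula α n → Prop
  | of_isQF {n} {φ : L.BoundedFormula α n} (h : φ.IsQF) : IsPi1 φ
  | all {n} {φ : L.BoundedFormula α (n + 1)} (h : IsPi1 φ) : IsPi1 φ.all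

/-- Σ₂-formulas: a block of existential quantifiers applied to a Π₁-formula. -/
inductive IsSigma2 {L : FirstOrder.Language} {α : Type} :
    {n : ℕ} → L.BoundedFormula α n → Prop
  | of_isPi1 {n} {φ : L.BoundedFormula α n} (h : IsPi1 φ) : IsSigma2 φ
  | ex {n} {φ : L.BoundedFormula α (n + 1)} (h : IsSigma2 φ) : IsSigma2 φ.ex

/-- Realization of a formula with `k` parameters in the segment structure below `β`. -/
def RealizeIn (le1 le2 : Ordinal → Ordinal → Prop) (β : Ordinal) {k : ℕ}
    (φ : ordLang.Formula (Fin k)) (v : Fin k → {x : Ordinal // x < β}) : Prop :=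
  letI := segStr le1 le2 β
  φ.Realize v

/-- `a ≤ b` and the segment below `a` is an elementary substructure of the segment below `b`
with respect to the class `C` of formulas (with parameters from below `a`). -/
def ElemSub (C : ∀ k : ℕ, ordLang.Formula (Fin k) → Prop)
    (le1 le2 : Ordinal → Ordinal → Prop) (a b : Ordinal) : Prop :=
  ∃ hab : a ≤ b,
    ∀ (k : ℕ) (φ : ordLang.Formula (Fin k)), C k φ →
      ∀ v : Fin k → {x : Ordinal // x < a},
        RealizeIn le1 le2 a φ v ↔
          RealizeIn le1 le2 b φ (fun j => ⟨(v j).1, lt_of_lt_of_le (v j).2 hab⟩)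

/-- The pair of relations `le1`, `le2` satisfies the simultaneous recursive definition of
`≤₁` and `≤₂` on the ordinals: `α ≤ᵢ β` iff `α ≤ β` and the segment below `α` is a
Σᵢ-elementary substructure of the segment below `β`. -/
def IsR2Pair (le1 le2 : Ordinal → Ordinal → Prop) : Prop :=
  (∀ a b, le1 a b ↔ ElemSub (fun _ φ => IsSigma1 φ) le1 le2 a b) ∧
  (∀ a b, le2 a b ↔ ElemSub (fun _ φ => IsSigma2 φ) le1 le2 a b)

/-- The strict part of `≤₁`. -/
def Lt1 (le1 : Ordinal → Ordinal → Prop) (a b : Ordinal) : Prop := le1 a b ∧ a ≠ b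

/-- The strict part of `≤₂`. -/
def Lt2 (le2 : Ordinal → Ordinal → Prop) (a b : Ordinal) : Prop := le2 a b ∧ a ≠ b

/-- `1^∞`: the least ordinal `ν` such that below `ν` there are `<₂`-chains of every finite
length. -/
noncomputable def OneInfty (le2 : Ordinal → Ordinal → Prop) : Ordinal :=
  sInf {ν : Ordinal | ∀ n : ℕ, ∃ β : Fin n → Ordinal,
    (∀ i, β i < ν) ∧
    ∀ (i : ℕ) (hi : i + 1 < n), Lt2 le2 (β ⟨i, Nat.lt_of_succ_lt hi⟩) (β ⟨i + 1, hi⟩)}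

/-- A respecting forest of order 2: a finite structure with a linear order `≤₀` and partial
orders `≤₁`, `≤₂` which are forests, with `≤₂ ⊆ ≤₁ ⊆ ≤₀`, and `≤ᵢ₊₁` respecting `≤ᵢ`. -/
structure RForest where
  P : Type
  [fintypeP : Fintype P]
  le0 : P → P → Prop
  le1 : P → P → Prop
  le2 : P → P → Prop
  le0_refl : ∀ p, le0 p p
  le0_trans : ∀ p q r, le0 p q → le0 q r → le0 p r
  le0_antisymm : ∀ p q, le0 p q → le0 q p → p = q
  le0_total : ∀ p q, le0 p q ∨ le0 q p
  le1_refl : ∀ p, le1 p p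
  le1_trans : ∀ p q r, le1 p q → le1 q r → le1 p r
  le1_antisymm : ∀ p q, le1 p q → le1 q p → p = q
  le2_refl : ∀ p, le2 p p
  le2_trans : ∀ p q r, le2 p q → le2 q r → le2 p r
  le2_antisymm : ∀ p q, le2 p q → le2 q p → p = q
  le2_sub_le1 : ∀ p q, le2 p q → le1 p q
  le1_sub_le0 : ∀ p q, le1 p q → le0 p q
  forest1 : ∀ p q r, le1 q p → le1 r p → le1 q r ∨ le1 r q
  forest2 : ∀ p q r, le2 q p → le2 r p → le2 q r ∨ le2 r q
  respects1 : ∀ p q r, le0 p q → le0 q r → le1 p r → le1 p q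
  respects2 : ∀ p q r, le1 p q → le1 q r → le2 p r → le2 p q

attribute [instance] RForest.fintypeP

/-- The finite set `X` of ordinals, with the relations induced from `ℛ₂`, is isomorphic to the
respecting forest `F`. -/
def Realizes (le1 le2 : Ordinal → Ordinal → Prop) (F : RForest) (X : Finset Ordinal) : Prop :=
  ∃ e : F.P ≃ {x // x ∈ X}, ∀ p q : F.P,
    (F.le0 p q ↔ ((e p : Ordinal) ≤ (e q : Ordinal))) ∧
    (F.le1 p q ↔ le1 (e p : Ordinal) (e q : Ordinal)) ∧
    (F.le2 p q ↔ le2 (e p : Ordinal) (e q : Ordinal))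

/-- Pointwise comparison of two finite sets of ordinals via their increasing enumerations. -/
def pwLE (X Y : Finset Ordinal) : Prop :=
  ∃ h : X.card = Y.card, ∀ i : Fin X.card,
    ((X.orderIsoOfFin rfl i : {x // x ∈ X}) : Ordinal) ≤
      ((Y.orderIsoOfFin h.symm i : {x // x ∈ Y}) : Ordinal)

/-- `X` is the isominimal realization of the respecting forest `F` in `ℛ₂`: it is isomorphic
to `F` and pointwise minimal among all finite substructures of `ℛ₂` isomorphic to `F`. -/
def IsIsominimalRealization (le1 le2 : Ordinal → Ordinal → Prop) (F : RForest)
    (X : Finset Ordinal) : Prop :=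
  Realizes le1 le2 F X ∧ ∀ Y : Finset Ordinal, Realizes le1 le2 F Y → pwLE X Y

/-- A covering of the respecting forest `F` into `ℛ₂`. -/
def IsCovering (le1 le2 : Ordinal → Ordinal → Prop) (F : RForest)
    (c : F.P → Ordinal) : Prop :=
  (∀ p q, F.le0 p q ↔ c p ≤ c q) ∧
  (∀ p q, F.le1 p q → le1 (c p) (c q)) ∧
  (∀ p q, F.le2 p q → le2 (c p) (c q))


/-- A covering of the respecting forest `F` into the respecting forest `G`. -/
def ForestCovering (F G : RForest) (f : F.P → G.P) : Prop :=
  (∀ p q, F.le0 p q ↔ G.le0 (f p) (f q)) ∧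
  (∀ p q, F.le1 p q → G.le1 (f p) (f q)) ∧
  (∀ p q, F.le2 p q → G.le2 (f p) (f q))

/-!
Over a finite relational language a quantifier-free formula only sees the atomic diagram of a
tuple, so `≤₁` and `≤₂` become back-and-forth conditions: `α ≤₁ β` says that every finite tuple
below `β` has a copy below `α` that fixes the entries below `α`, and `α ≤₂ β` says that the copy
can be chosen so that each of its finite extensions below `α` is a copy of an extension below `β`
of the original tuple.

Below any covering there is a pointwise minimal covering `c`, and it reflects `≤₁` and `≤₂`, hence
realizes the forest. Indeed, if `c p ≤ᵢ c q` fails in the forest with `c q` least, then part of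
`c` can be moved down. For `i = 1`, and for `i = 2` if every `t` above `q` with `p ≤₁ t` satisfies
`q ≤₁ t`, the points below `c q` are reflected below `c p`; in the second case the copy is chosen
so that points `≤₁ c q` become points `≤₁ c p`. Otherwise some `t` above `q` satisfies `p ≤₁ t` but
not `q ≤₁ t`; then the points `r` with `q ≤₁ r` are reflected below `c p` along `c p ≤₁ c t`, and
the result is lifted along `c p ≤₂ c q` into the gap just below `c q`.
-/

universe u v w

section ModelTheory

open FirstOrder.Language FirstOrder.Language.BoundedFormula

variable {L : FirstOrder.Language.{u, v}} {α β : Type} {m n : ℕ}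

theorem IsSigma1.exs : ∀ {n} {φ : L.BoundedFormula α n}, IsSigma1 φ → IsSigma1 φ.exs
  | 0, _, hφ => hφ
  | _ + 1, _, hφ => hφ.ex.exs

theorem IsPi1.alls : ∀ {n} {φ : L.BoundedFormula α n}, IsPi1 φ → IsPi1 φ.alls
  | 0, _, hφ => hφ
  | _ + 1, _, hφ => hφ.all.alls

theorem IsSigma2.exs : ∀ {n} {φ : L.BoundedFormula α n}, IsSigma2 φ → IsSigma2 φ.exs
  | 0, _, hφ => hφ
  | _ + 1, _, hφ => hφ.ex.exs

theorem IsPi1.relabel {φ : L.BoundedFormula α m} (hφ : IsPi1 φ) (f : α → β ⊕ Fin n) :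
    IsPi1 (φ.relabel f) := by
  induction hφ with
  | of_isQF hφ => exact .of_isQF (hφ.relabel f)
  | all _ ih => simpa only [relabel_all] using ih.all

theorem isSigma1_iExs [Finite β] {φ : L.Formula (α ⊕ β)} (hφ : φ.IsQF) :
    IsSigma1 (φ.iExs β) :=
  (IsSigma1.of_isQF (hφ.relabel _)).exs

theorem isPi1_iAlls [Finite β] {φ : L.Formula (α ⊕ β)} (hφ : φ.IsQF) :
    IsPi1 (φ.iAlls β) :=
  (IsPi1.of_isQF (hφ.relabel _)).alls

theorem isSigma2_iExs [Finite β] {φ : L.Formula (α ⊕ β)} (hφ : IsPi1 φ) :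
    IsSigma2 (φ.iExs β) :=
  (IsSigma2.of_isPi1 (hφ.relabel _)).exs

theorem isAtomic_toFormula {γ : Type*} {φ : L.BoundedFormula γ n} (hφ : φ.IsAtomic) :
    φ.toFormula.IsAtomic := by
  cases hφ with
  | equal t₁ t₂ => exact .equal _ _
  | rel R ts => exact .rel _ _

theorem isQF_toFormula {γ : Type*} {φ : L.BoundedFormula γ n} (hφ : φ.IsQF) : φ.toFormula.IsQF := by
  induction hφ with
  | falsum => exact .falsum
  | of_isAtomic hφ => exact (isAtomic_toFormula hφ).isQF
  | imp _ _ ih₁ ih₂ => exact ih₁.imp ih₂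

theorem IsPi1.toFormula {φ : L.BoundedFormula α n} (hφ : IsPi1 φ) : IsPi1 φ.toFormula := by
  induction hφ with
  | of_isQF hφ => exact .of_isQF (isQF_toFormula hφ)
  | all _ ih => exact (ih.relabel _).all

theorem IsSigma1.exists_exs_eq {φ : L.BoundedFormula α n} (hφ : IsSigma1 φ) :
    ∃ (m : ℕ) (θ : L.BoundedFormula α m), θ.IsQF ∧ φ.exs = θ.exs := by
  induction hφ with
  | of_isQF hφ => exact ⟨_, _, hφ, rfl⟩
  | ex _ ih => exact ih

theorem IsPi1.exists_alls_eq {φ : L.BoundedFormula α n} (hφ : IsPi1 φ) :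
    ∃ (m : ℕ) (θ : L.BoundedFormula α m), θ.IsQF ∧ φ.alls = θ.alls := by
  induction hφ with
  | of_isQF hφ => exact ⟨_, _, hφ, rfl⟩
  | all _ ih => exact ih

theorem IsSigma2.exists_exs_eq {φ : L.BoundedFormula α n} (hφ : IsSigma2 φ) :
    ∃ (m : ℕ) (ψ : L.BoundedFormula α m), IsPi1 ψ ∧ φ.exs = ψ.exs := by
  induction hφ with
  | of_isPi1 hφ => exact ⟨_, _, hφ, rfl⟩
  | ex _ ih => exact ih

theorem IsSigma1.exists_realize_iff {φ : L.Formula α} (hφ : IsSigma1 φ) :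
    ∃ (m : ℕ) (θ : L.BoundedFormula α m), θ.IsQF ∧
      ∀ (M : Type w) [L.Structure M] (v : α → M),
        φ.Realize v ↔ ∃ xs : Fin m → M, θ.Realize v xs := by
  obtain ⟨m, θ, hθ, hφθ : φ = θ.exs⟩ := hφ.exists_exs_eq
  exact ⟨m, θ, hθ, fun M _ v => by rw [hφθ, realize_exs]⟩

theorem IsSigma2.exists_realize_iff {φ : L.Formula α} (hφ : IsSigma2 φ) :
    ∃ (m n : ℕ) (θ : L.BoundedFormula (α ⊕ Fin m) n), θ.IsQF ∧
      ∀ (M : Type w) [L.Structure M] (v : α → M),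
        φ.Realize v ↔ ∃ xs : Fin m → M, ∀ zs : Fin n → M, θ.Realize (Sum.elim v xs) zs := by
  obtain ⟨m, ψ, hψ, hφψ : φ = ψ.exs⟩ := hφ.exists_exs_eq
  obtain ⟨n, θ, hθ, hψθ : ψ.toFormula = θ.alls⟩ := hψ.toFormula.exists_alls_eq
  refine ⟨m, n, θ, hθ, fun M _ v => ?_⟩
  rw [hφψ, realize_exs]
  refine exists_congr fun xs => ?_
  rw [← realize_alls, ← hψθ, realize_toFormula, Sum.elim_comp_inl, Sum.elim_comp_inr]

theorem isQF_iSup {β : Type*} [Finite β] {f : β → L.BoundedFormula α n} (hf : ∀ b, (f b).IsQF) :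
    (BoundedFormula.iSup f).IsQF := by
  let _ := Fintype.ofFinite β
  change (((Finset.univ : Finset β).toList.map f).foldr (· ⊔ ·) ⊥).IsQF
  generalize (Finset.univ : Finset β).toList = l
  induction l with
  | nil => exact isQF_bot
  | cons b l ih => exact (hf b).sup ih

theorem isQF_iInf {β : Type*} [Finite β] {f : β → L.BoundedFormula α n} (hf : ∀ b, (f b).IsQF) :
    (BoundedFormula.iInf f).IsQF := by
  let _ := Fintype.ofFinite β
  change (((Finset.univ : Finset β).toList.map f).foldr (· ⊓ ·) ⊤).IsQF
  generalize (Finset.univ : Finset β).toList = l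
  induction l with
  | nil => exact .top
  | cons b l ih => exact (hf b).inf ih

/-- The atomic diagram of a tuple `v` in an `L`-structure: the set of atomic formulas, in
variables indexing the tuple, that `v` satisfies. -/
def atomicDiagram (L : FirstOrder.Language.{u, v}) {ι M : Type*} [L.Structure M] (v : ι → M) :
    Set {φ : L.Formula ι // φ.IsAtomic} :=
  {φ | φ.1.Realize v}

section Diagram

variable {M N : Type*} [L.Structure M] [L.Structure N] {ι κ : Type*}

theorem atomicDiagram_comp_eq {f : ι → M} {g : ι → N}
    (h : atomicDiagram L f = atomicDiagram L g) (σ : κ → ι) :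
    atomicDiagram L (f ∘ σ) = atomicDiagram L (g ∘ σ) := by
  ext ⟨φ, hφ⟩
  have := Set.ext_iff.1 h ⟨φ.relabel σ, hφ.relabel _⟩
  simpa only [atomicDiagram, Set.mem_ofPred_eq, Formula.realize_relabel] using this

theorem eq_iff_of_atomicDiagram_eq {f : ι → M} {g : ι → N}
    (h : atomicDiagram L f = atomicDiagram L g) (i j : ι) : f i = f j ↔ g i = g j := by
  have := Set.ext_iff.1 h ⟨(Term.var i).equal (Term.var j), .equal _ _⟩
  simpa only [atomicDiagram, Set.mem_ofPred_eq, Formula.realize_equal, Term.realize_var] using this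

theorem relMap_iff_of_atomicDiagram_eq {f : ι → M} {g : ι → N}
    (h : atomicDiagram L f = atomicDiagram L g) (R : L.Relations n) (x : Fin n → ι) :
    Structure.RelMap R (f ∘ x) ↔ Structure.RelMap R (g ∘ x) := by
  have := Set.ext_iff.1 h ⟨R.formula fun l => Term.var (x l), .rel _ _⟩
  simpa only [atomicDiagram, Set.mem_ofPred_eq, Formula.realize_rel, Term.realize_var,
    Function.comp_def] using this

theorem realize_iff_of_atomicDiagram_eq {φ : L.Formula ι} (hφ : φ.IsQF) {f : ι → M} {g : ι → N}
    (h : atomicDiagram L f = atomicDiagram L g) : φ.Realize f ↔ φ.Realize g := by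
  induction hφ with
  | falsum => exact Iff.rfl
  | of_isAtomic hφ => exact Set.ext_iff.1 h ⟨_, hφ⟩
  | imp _ _ ih₁ ih₂ => simpa only [Formula.realize_imp] using imp_congr ih₁ ih₂

theorem boundedFormula_realize_iff_of_atomicDiagram_eq {φ : L.BoundedFormula κ n}
    (hφ : φ.IsQF) {v : κ → M} {xs : Fin n → M} {w : κ → N} {ys : Fin n → N}
    (h : atomicDiagram L (Sum.elim v xs) = atomicDiagram L (Sum.elim w ys)) :
    φ.Realize v xs ↔ φ.Realize w ys := by
  have := realize_iff_of_atomicDiagram_eq (isQF_toFormula hφ) h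
  simpa only [realize_toFormula, Sum.elim_comp_inl, Sum.elim_comp_inr] using this

end Diagram

section Relational

variable [L.IsRelational] {ι : Type*}

theorem exists_eq_var_inl (t : L.Term (ι ⊕ Fin 0)) : ∃ i, t = Term.var (Sum.inl i) := by
  match t with
  | .var (.inl i) => exact ⟨i, rfl⟩
  | .var (.inr i) => exact i.elim0
  | .func f _ => exact isEmptyElim f

theorem isAtomic_iff_of_isRelational {φ : L.Formula ι} : φ.IsAtomic ↔
    (∃ i j : ι, φ = (Term.var i).equal (Term.var j)) ∨
      ∃ (n : ℕ) (R : L.Relations n) (x : Fin n → ι), φ = R.formula fun l => Term.var (x l) := by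
  constructor
  · rintro (⟨t₁, t₂⟩ | ⟨R, ts⟩)
    · obtain ⟨i, rfl⟩ := exists_eq_var_inl t₁
      obtain ⟨j, rfl⟩ := exists_eq_var_inl t₂
      exact .inl ⟨i, j, rfl⟩
    · choose x hx using fun l => exists_eq_var_inl (ts l)
      obtain rfl : ts = _ := funext hx
      exact .inr ⟨_, R, x, rfl⟩
  · rintro (⟨i, j, rfl⟩ | ⟨n, R, x, rfl⟩)
    · exact .equal _ _
    · exact .rel _ _

theorem atomicDiagram_eq_iff {M N : Type*} [L.Structure M] [L.Structure N] {f : ι → M}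
    {g : ι → N} : atomicDiagram L f = atomicDiagram L g ↔ (∀ i j, f i = f j ↔ g i = g j) ∧
      ∀ (n : ℕ) (R : L.Relations n) (x : Fin n → ι),
        Structure.RelMap R (f ∘ x) ↔ Structure.RelMap R (g ∘ x) := by
  refine ⟨fun h => ⟨eq_iff_of_atomicDiagram_eq h, fun _ => relMap_iff_of_atomicDiagram_eq h⟩,
    fun ⟨heq, hrel⟩ => Set.ext fun ⟨φ, hφ⟩ => ?_⟩
  obtain ⟨i, j, rfl⟩ | ⟨n, R, x, rfl⟩ := isAtomic_iff_of_isRelational.1 hφ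
  · simpa only [atomicDiagram, Set.mem_ofPred_eq, Formula.realize_equal, Term.realize_var]
      using heq i j
  · simpa only [atomicDiagram, Set.mem_ofPred_eq, Formula.realize_rel, Term.realize_var,
      Function.comp_def] using hrel n R x

instance [Finite ι] [Finite (Σ n, L.Relations n)] : Finite {φ : L.Formula ι // φ.IsAtomic} := by
  let eqs : ι × ι → L.Formula ι := fun p => (Term.var p.1).equal (Term.var p.2)
  let rels : (Σ R : (Σ n, L.Relations n), Fin R.1 → ι) → L.Formula ι :=
    fun p => p.1.2.formula fun l => Term.var (p.2 l)
  refine ((Set.finite_range eqs).union (Set.finite_range rels)).subset fun φ hφ => ?_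
  obtain ⟨i, j, rfl⟩ | ⟨n, R, x, rfl⟩ := isAtomic_iff_of_isRelational.1 hφ
  · exact .inl ⟨(i, j), rfl⟩
  · exact .inr ⟨⟨⟨n, R⟩, x⟩, rfl⟩

end Relational

theorem exists_isQF_realize_iff_mem [Finite {φ : L.Formula α // φ.IsAtomic}]
    (𝒟 : Set (Set {φ : L.Formula α // φ.IsAtomic})) :
    ∃ φ : L.Formula α, φ.IsQF ∧ ∀ (M : Type w) [L.Structure M] (v : α → M),
      φ.Realize v ↔ atomicDiagram L v ∈ 𝒟 := by
  classical
  let lit (D : Set {φ : L.Formula α // φ.IsAtomic}) (a : {φ : L.Formula α // φ.IsAtomic}) :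
    L.Formula α := if a ∈ D then a.1 else ∼a.1
  have hlit (D a) : (lit D a).IsQF := by
    unfold lit; split_ifs
    exacts [a.2.isQF, a.2.isQF.not]
  refine ⟨BoundedFormula.iSup fun D : 𝒟 => BoundedFormula.iInf (lit D),
    isQF_iSup fun D => isQF_iInf (hlit D), fun M _ v => ?_⟩
  have realize_lit (D a) : (lit D a).Realize v ↔ (a ∈ D ↔ a ∈ atomicDiagram L v) := by
    by_cases ha : a ∈ D <;> simp [lit, ha, atomicDiagram]
  simp only [Formula.Realize] at realize_lit
  simp only [Formula.Realize, realize_iSup, realize_iInf, realize_lit, ← Set.ext_iff,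
    Subtype.exists, exists_prop, exists_eq_right]

section Elementary

variable {M N : Type w} [L.Structure M] [L.Structure N]

/-- The embedding `j` is elementary for the class `C` of formulas: it preserves and reflects
every formula of `C` at every tuple of parameters. -/
def IsElementaryFor (C : ∀ k : ℕ, L.Formula (Fin k) → Prop) (j : M ↪[L] N) : Prop :=
  ∀ (k : ℕ) (φ : L.Formula (Fin k)), C k φ → ∀ v : Fin k → M, φ.Realize v ↔ φ.Realize (j ∘ v)

/-- Every finite tuple of `N` is mirrored by a tuple of `M` with the same atomic diagram that
fixes the entries already in `M`. This is Σ₁-elementarity of `j` without formulas. -/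
def ReflectsTuples (j : M ↪[L] N) : Prop :=
  ∀ (ι : Type) [Finite ι] (f : ι → N), ∃ g : ι → M,
    (∀ i x, f i = j x → g i = x) ∧ atomicDiagram L g = atomicDiagram L f

/-- Every finite tuple of `N` is mirrored by a tuple of `M` that fixes the entries already in `M`
and all of whose finite extensions in `M` have the atomic diagram of an extension in `N` of the
given tuple. This is Σ₂-elementarity of `j` without formulas. -/
def ReflectsTypes (j : M ↪[L] N) : Prop :=
  ∀ (ι κ : Type) [Finite ι] [Finite κ] (f : ι → N), ∃ g : ι → M,
    (∀ i x, f i = j x → g i = x) ∧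
      ∀ y : κ → M, ∃ z : κ → N,
        atomicDiagram L (Sum.elim g y) = atomicDiagram L (Sum.elim f z)

variable {j : M ↪[L] N}

theorem ReflectsTypes.reflectsTuples (h : ReflectsTypes j) : ReflectsTuples j := by
  intro ι _ f
  obtain ⟨g, hfix, hg⟩ := h ι Empty f
  obtain ⟨z, hz⟩ := hg isEmptyElim
  exact ⟨g, hfix, atomicDiagram_comp_eq hz Sum.inl⟩

theorem exists_parameters (j : M ↪[L] N) {ι : Type} [Finite ι] (f : ι → N) :
    ∃ (k : ℕ) (v : Fin k → M), ∀ i x, f i = j x → ∃ l, v l = x := by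
  obtain ⟨k, v, -, hv⟩ := ((Set.finite_range f).preimage j.injective.injOn).fin_param
  exact ⟨k, v, fun i x hx => hv.symm.subset ⟨i, hx⟩⟩

theorem eq_of_atomicDiagram_eq {k : ℕ} {ι : Type} {v : Fin k → M} {f : ι → N} {g : ι → M}
    (hv : ∀ i x, f i = j x → ∃ l, v l = x)
    (h : atomicDiagram L (Sum.elim v g) = atomicDiagram L (Sum.elim (j ∘ v) f))
    {i : ι} {x : M} (hx : f i = j x) : g i = x := by
  obtain ⟨l, rfl⟩ := hv i x hx
  exact (eq_iff_of_atomicDiagram_eq h (Sum.inr i) (Sum.inl l)).2 hx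

theorem reflectsTuples_of_isElementaryFor [L.IsRelational] [Finite (Σ n, L.Relations n)]
    (h : IsElementaryFor (fun _ φ => IsSigma1 φ) j) : ReflectsTuples j := by
  intro ι _ f
  obtain ⟨k, v, hv⟩ := exists_parameters j f
  obtain ⟨φ, hφ, realize_φ⟩ := exists_isQF_realize_iff_mem (L := L)
    {atomicDiagram L (Sum.elim (j ∘ v) f)}
  have hN : (φ.iExs ι).Realize (j ∘ v) :=
    Formula.realize_iExs.2 ⟨f, (realize_φ N _).2 rfl⟩
  obtain ⟨g, hg⟩ := Formula.realize_iExs.1 ((h k _ (isSigma1_iExs hφ) v).2 hN)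
  have hg := (realize_φ M _).1 hg
  exact ⟨g, fun i x => eq_of_atomicDiagram_eq hv hg, atomicDiagram_comp_eq hg Sum.inr⟩

theorem isElementaryFor_isSigma1_iff [L.IsRelational] [Finite (Σ n, L.Relations n)] :
    IsElementaryFor (fun _ φ => IsSigma1 φ) j ↔ ReflectsTuples j := by
  refine ⟨reflectsTuples_of_isElementaryFor, fun h k φ hφ v => ?_⟩
  obtain ⟨m, θ, hθ, realize_φ⟩ := hφ.exists_realize_iff
  rw [realize_φ, realize_φ]
  constructor
  · rintro ⟨xs, hxs⟩
    exact ⟨j ∘ xs, (hθ.realize_embedding j).2 hxs⟩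
  · rintro ⟨xs, hxs⟩
    obtain ⟨g, hfix, hg⟩ := h _ (Sum.elim (j ∘ v) xs)
    obtain rfl : g ∘ Sum.inl = v := funext fun l => hfix (Sum.inl l) _ rfl
    rw [← Sum.elim_comp_inl_inr g] at hg
    exact ⟨g ∘ Sum.inr, (boundedFormula_realize_iff_of_atomicDiagram_eq hθ hg).2 hxs⟩

theorem reflectsTypes_of_isElementaryFor [L.IsRelational] [Finite (Σ n, L.Relations n)]
    (h : IsElementaryFor (fun _ φ => IsSigma2 φ) j) : ReflectsTypes j := by
  intro ι κ _ _ f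
  obtain ⟨k, v, hv⟩ := exists_parameters j f
  obtain ⟨φ, hφ, realize_φ⟩ := exists_isQF_realize_iff_mem (L := L)
    (Set.range fun z : κ → N => atomicDiagram L (Sum.elim (Sum.elim (j ∘ v) f) z))
  have hN : ((φ.iAlls κ).iExs ι).Realize (j ∘ v) :=
    Formula.realize_iExs.2 ⟨f, Formula.realize_iAlls.2 fun z => (realize_φ N _).2 ⟨z, rfl⟩⟩
  obtain ⟨g, hg⟩ := Formula.realize_iExs.1 ((h k _ (isSigma2_iExs (isPi1_iAlls hφ)) v).2 hN)
  have hg (y : κ → M) : ∃ z : κ → N, atomicDiagram L (Sum.elim (Sum.elim v g) y) =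
      atomicDiagram L (Sum.elim (Sum.elim (j ∘ v) f) z) := by
    obtain ⟨z, hz⟩ := (realize_φ M _).1 (Formula.realize_iAlls.1 hg y)
    exact ⟨z, hz.symm⟩
  refine ⟨g, fun i x => ?_, fun y => ?_⟩
  · obtain ⟨z, hz⟩ := hg fun _ => x
    exact eq_of_atomicDiagram_eq hv (atomicDiagram_comp_eq hz Sum.inl)
  · obtain ⟨z, hz⟩ := hg y
    have := atomicDiagram_comp_eq hz (Sum.map Sum.inr id)
    exact ⟨z, by simpa only [Sum.elim_comp_map, Sum.elim_comp_inr, Function.comp_id] using this⟩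

theorem isElementaryFor_isSigma2_iff [L.IsRelational] [Finite (Σ n, L.Relations n)] :
    IsElementaryFor (fun _ φ => IsSigma2 φ) j ↔ ReflectsTypes j := by
  refine ⟨reflectsTypes_of_isElementaryFor, fun h k φ hφ v => ?_⟩
  obtain ⟨m, n, θ, hθ, realize_φ⟩ := hφ.exists_realize_iff
  rw [realize_φ, realize_φ]
  constructor
  · rintro ⟨xs, hxs⟩
    refine ⟨j ∘ xs, fun zs => ?_⟩
    obtain ⟨g, hfix, hg⟩ :=
      h.reflectsTuples _ (Sum.elim (Sum.elim (j ∘ v) (j ∘ xs)) zs)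
    have hinl : g ∘ Sum.inl = Sum.elim v xs := by
      ext (l | l)
      exacts [hfix (Sum.inl (Sum.inl l)) _ rfl, hfix (Sum.inl (Sum.inr l)) _ rfl]
    rw [← Sum.elim_comp_inl_inr g, hinl] at hg
    exact (boundedFormula_realize_iff_of_atomicDiagram_eq hθ hg).1 (hxs _)
  · rintro ⟨xs, hxs⟩
    obtain ⟨g, hfix, hg⟩ := h _ (Fin n) (Sum.elim (j ∘ v) xs)
    obtain rfl : g ∘ Sum.inl = v := funext fun l => hfix (Sum.inl l) _ rfl
    refine ⟨g ∘ Sum.inr, fun ys => ?_⟩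
    obtain ⟨zs, hzs⟩ := hg ys
    rw [← Sum.elim_comp_inl_inr g] at hzs
    exact (boundedFormula_realize_iff_of_atomicDiagram_eq hθ hzs).2 (hxs zs)

end Elementary

end ModelTheory

theorem exists_lt_forall_le {α ι : Type*} [LinearOrder α] [Finite ι] {x b : α} {f : ι → α}
    (hx : x < b) (hf : ∀ i, f i < b) : ∃ w < b, x ≤ w ∧ ∀ i, f i ≤ w := by
  have : Nonempty (Set.Iio b) := ⟨⟨x, hx⟩⟩
  obtain ⟨⟨w, hw⟩, hle⟩ :=
    Finite.exists_le fun o : Option ι => (o.elim ⟨x, hx⟩ fun i => ⟨f i, hf i⟩ : Set.Iio b)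
  exact ⟨w, hw, hle none, fun i => hle (some i)⟩

section Segments

open FirstOrder.Language

variable {le1 le2 : Ordinal.{u} → Ordinal.{u} → Prop} {a b c x : Ordinal.{u}} {ι κ : Type}

/-- The initial segment of `ℛ₂` below `b`, as an `ordLang`-structure. The relations are
arguments so that the structure can be found by instance search. -/
@[nolint unusedArguments]
def Segment (_le1 _le2 : Ordinal.{u} → Ordinal.{u} → Prop) (b : Ordinal.{u}) : Type (u + 1) :=
  {x : Ordinal.{u} // x < b}

namespace Segment

/-- The ordinal underlying an element of a segment. -/
def val (s : Segment le1 le2 b) : Ordinal.{u} := Subtype.val s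

theorem val_lt (s : Segment le1 le2 b) : s.val < b := Subtype.prop s

theorem val_inj {s t : Segment le1 le2 b} : s.val = t.val ↔ s = t := Subtype.val_inj

end Segment

instance : ordLang.Structure (Segment le1 le2 b) := segStr le1 le2 b

instance : ordLang.IsRelational := fun _ => inferInstanceAs (IsEmpty Empty)

instance : Finite (Σ n, ordLang.Relations n) := by
  refine Finite.of_surjective ![⟨2, .le⟩, ⟨2, .le1⟩, ⟨2, .le2⟩] ?_
  rintro ⟨_, _ | _ | _⟩
  exacts [⟨0, rfl⟩, ⟨1, rfl⟩, ⟨2, rfl⟩]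

/-- The inclusion of the segment below `a` into the segment below `b`. -/
def Segment.incl (hab : a ≤ b) : Segment le1 le2 a ↪[ordLang] Segment le1 le2 b where
  toFun s := ⟨s.val, s.val_lt.trans_le hab⟩
  inj' _ _ hst := Segment.val_inj.1 (Subtype.mk.inj hst)
  map_fun' f := isEmptyElim f
  map_rel' := by rintro _ (_ | _ | _) _ <;> rfl

theorem elemSub_iff {C : ∀ k : ℕ, ordLang.Formula (Fin k) → Prop} :
    ElemSub C le1 le2 a b ↔
      ∃ hab : a ≤ b, IsElementaryFor C (Segment.incl (le1 := le1) (le2 := le2) hab) :=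
  Iff.rfl

/-- The tuples `f` and `g` of ordinals have the same atomic type in `ℛ₂`, that is, `f i ↦ g i`
is a well-defined isomorphism of finite substructures. -/
def SameType (le1 le2 : Ordinal.{u} → Ordinal.{u} → Prop) (f g : ι → Ordinal.{u}) : Prop :=
  ∀ i j, (f i ≤ f j ↔ g i ≤ g j) ∧ (le1 (f i) (f j) ↔ le1 (g i) (g j)) ∧
    (le2 (f i) (f j) ↔ le2 (g i) (g j))

namespace SameType

variable {f g k : ι → Ordinal.{u}}

theorem symm (hfg : SameType le1 le2 f g) : SameType le1 le2 g f := fun i j =>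
  ⟨(hfg i j).1.symm, (hfg i j).2.1.symm, (hfg i j).2.2.symm⟩

theorem trans (hfg : SameType le1 le2 f g) (hgk : SameType le1 le2 g k) :
    SameType le1 le2 f k := fun i j =>
  ⟨(hfg i j).1.trans (hgk i j).1, (hfg i j).2.1.trans (hgk i j).2.1,
    (hfg i j).2.2.trans (hgk i j).2.2⟩

theorem comp (hfg : SameType le1 le2 f g) (σ : κ → ι) : SameType le1 le2 (f ∘ σ) (g ∘ σ) :=
  fun i j => hfg (σ i) (σ j)

theorem lt_iff (hfg : SameType le1 le2 f g) (i j : ι) : f i < f j ↔ g i < g j := by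
  simpa only [not_le] using (hfg j i).1.not

theorem eq_iff (hfg : SameType le1 le2 f g) (i j : ι) : f i = f j ↔ g i = g j := by
  simp only [le_antisymm_iff, (hfg i j).1, (hfg j i).1]

end SameType

theorem atomicDiagram_eq_iff_sameType {f : ι → Segment le1 le2 a} {g : ι → Segment le1 le2 b} :
    atomicDiagram ordLang f = atomicDiagram ordLang g ↔
      SameType le1 le2 (Segment.val ∘ f) (Segment.val ∘ g) := by
  rw [atomicDiagram_eq_iff]
  constructor
  · rintro ⟨-, hrel⟩ i j
    exact ⟨hrel 2 .le ![i, j], hrel 2 .le1 ![i, j], hrel 2 .le2 ![i, j]⟩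
  · refine fun h => ⟨fun i j => ?_, ?_⟩
    · simpa only [Function.comp_apply, Segment.val_inj] using h.eq_iff i j
    · rintro _ (_ | _ | _) x
      exacts [(h (x 0) (x 1)).1, (h (x 0) (x 1)).2.1, (h (x 0) (x 1)).2.2]

theorem atomicDiagram_sumElim_eq_iff_sameType {f : ι → Segment le1 le2 a}
    {y : κ → Segment le1 le2 a} {g : ι → Segment le1 le2 b} {z : κ → Segment le1 le2 b} :
    atomicDiagram ordLang (Sum.elim f y) = atomicDiagram ordLang (Sum.elim g z) ↔
      SameType le1 le2 (Sum.elim (Segment.val ∘ f) (Segment.val ∘ y))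
        (Sum.elim (Segment.val ∘ g) (Segment.val ∘ z)) := by
  rw [atomicDiagram_eq_iff_sameType, Sum.comp_elim, Sum.comp_elim]

theorem reflectsTuples_incl_iff (hab : a ≤ b) :
    ReflectsTuples (Segment.incl (le1 := le1) (le2 := le2) hab) ↔
      ∀ (ι : Type) [Finite ι] (f : ι → Ordinal.{u}), (∀ i, f i < b) →
        ∃ g : ι → Ordinal.{u}, (∀ i, g i < a) ∧ (∀ i, f i < a → g i = f i) ∧
          SameType le1 le2 f g := by
  constructor
  · intro h ι _ f hf
    obtain ⟨g, hfix, hg⟩ := h ι fun i => ⟨f i, hf i⟩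
    exact ⟨fun i => (g i).val, fun i => (g i).val_lt,
      fun i hi => congrArg Segment.val (hfix i ⟨f i, hi⟩ rfl),
      (atomicDiagram_eq_iff_sameType.1 hg).symm⟩
  · intro h ι _ f
    obtain ⟨g, hga, hfix, hg⟩ := h ι (fun i => (f i).val) fun i => (f i).val_lt
    refine ⟨fun i => ⟨g i, hga i⟩, fun i x hx => Segment.val_inj.1 ?_,
      atomicDiagram_eq_iff_sameType.2 hg.symm⟩
    have hval : (f i).val = x.val := congrArg Segment.val hx
    exact (hfix i (hval ▸ x.val_lt)).trans hval

theorem reflectsTypes_incl_iff (hab : a ≤ b) :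
    ReflectsTypes (Segment.incl (le1 := le1) (le2 := le2) hab) ↔
      ∀ (ι κ : Type) [Finite ι] [Finite κ] (f : ι → Ordinal.{u}), (∀ i, f i < b) →
        ∃ g : ι → Ordinal.{u}, (∀ i, g i < a) ∧ (∀ i, f i < a → g i = f i) ∧
          ∀ y : κ → Ordinal.{u}, (∀ i, y i < a) → ∃ z : κ → Ordinal.{u}, (∀ i, z i < b) ∧
            SameType le1 le2 (Sum.elim f z) (Sum.elim g y) := by
  constructor
  · intro h ι κ _ _ f hf
    obtain ⟨g, hfix, hg⟩ := h ι κ fun i => ⟨f i, hf i⟩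
    refine ⟨fun i => (g i).val, fun i => (g i).val_lt,
      fun i hi => congrArg Segment.val (hfix i ⟨f i, hi⟩ rfl), fun y hy => ?_⟩
    obtain ⟨z, hz⟩ := hg fun i => ⟨y i, hy i⟩
    exact ⟨fun i => (z i).val, fun i => (z i).val_lt,
      (atomicDiagram_sumElim_eq_iff_sameType.1 hz).symm⟩
  · intro h ι κ _ _ f
    obtain ⟨g, hga, hfix, hg⟩ := h ι κ (fun i => (f i).val) fun i => (f i).val_lt
    refine ⟨fun i => ⟨g i, hga i⟩, fun i x hx => Segment.val_inj.1 ?_, fun y => ?_⟩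
    · have hval : (f i).val = x.val := congrArg Segment.val hx
      exact (hfix i (hval ▸ x.val_lt)).trans hval
    · obtain ⟨z, hzb, hz⟩ := hg (fun i => (y i).val) fun i => (y i).val_lt
      exact ⟨fun i => ⟨z i, hzb i⟩, atomicDiagram_sumElim_eq_iff_sameType.2 hz.symm⟩

namespace IsR2Pair

theorem le1_iff (h : IsR2Pair le1 le2) : le1 a b ↔ a ≤ b ∧
    ∀ (ι : Type) [Finite ι] (f : ι → Ordinal.{u}), (∀ i, f i < b) →
      ∃ g : ι → Ordinal.{u}, (∀ i, g i < a) ∧ (∀ i, f i < a → g i = f i) ∧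
        SameType le1 le2 f g := by
  simp only [h.1, elemSub_iff, isElementaryFor_isSigma1_iff, reflectsTuples_incl_iff, exists_prop]

theorem le2_iff (h : IsR2Pair le1 le2) : le2 a b ↔ a ≤ b ∧
    ∀ (ι κ : Type) [Finite ι] [Finite κ] (f : ι → Ordinal.{u}), (∀ i, f i < b) →
      ∃ g : ι → Ordinal.{u}, (∀ i, g i < a) ∧ (∀ i, f i < a → g i = f i) ∧
        ∀ y : κ → Ordinal.{u}, (∀ i, y i < a) → ∃ z : κ → Ordinal.{u}, (∀ i, z i < b) ∧
          SameType le1 le2 (Sum.elim f z) (Sum.elim g y) := by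
  simp only [h.2, elemSub_iff, isElementaryFor_isSigma2_iff, reflectsTypes_incl_iff, exists_prop]

theorem le_of_le1 (h : IsR2Pair le1 le2) (hab : le1 a b) : a ≤ b :=
  (h.le1_iff.1 hab).1

theorem exists_reflection_of_le1 (h : IsR2Pair le1 le2) [Finite ι] (hab : le1 a b)
    (f : ι → Ordinal.{u}) (hf : ∀ i, f i < b) :
    ∃ g : ι → Ordinal.{u}, (∀ i, g i < a) ∧ (∀ i, f i < a → g i = f i) ∧ SameType le1 le2 f g :=
  (h.le1_iff.1 hab).2 ι f hf

theorem le1_of_le2 (h : IsR2Pair le1 le2) (hab : le2 a b) : le1 a b := by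
  obtain ⟨hab, H⟩ := h.le2_iff.1 hab
  refine h.le1_iff.2 ⟨hab, fun ι _ f hf => ?_⟩
  obtain ⟨g, hga, hfix, hg⟩ := H ι Empty f hf
  obtain ⟨z, -, hz⟩ := hg isEmptyElim isEmptyElim
  exact ⟨g, hga, hfix, hz.comp Sum.inl⟩

theorem le1_trans (h : IsR2Pair le1 le2) (hab : le1 a b) (hbc : le1 b c) : le1 a c := by
  refine h.le1_iff.2 ⟨(h.le_of_le1 hab).trans (h.le_of_le1 hbc), fun ι _ f hf => ?_⟩
  obtain ⟨g, hgb, hfg, hg⟩ := h.exists_reflection_of_le1 hbc f hf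
  obtain ⟨k, hka, hgk, hk⟩ := h.exists_reflection_of_le1 hab g hgb
  refine ⟨k, hka, fun i hi => ?_, hg.trans hk⟩
  have hgi := hfg i (hi.trans_le (h.le_of_le1 hab))
  exact (hgk i (hgi ▸ hi)).trans hgi

theorem le1_respects (h : IsR2Pair le1 le2) (hab : a ≤ b) (hbc : b ≤ c) (hac : le1 a c) :
    le1 a b :=
  h.le1_iff.2 ⟨hab, fun _ _ f hf => h.exists_reflection_of_le1 hac f fun i => (hf i).trans_le hbc⟩

theorem le2_respects (h : IsR2Pair le1 le2) (hab : a ≤ b) (hbc : le1 b c) (hac : le2 a c) :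
    le2 a b := by
  obtain ⟨-, H⟩ := h.le2_iff.1 hac
  refine h.le2_iff.2 ⟨hab, fun ι κ _ _ f hf => ?_⟩
  have hfc i : f i < c := (hf i).trans_le (h.le_of_le1 hbc)
  obtain ⟨g, hga, hfix, hg⟩ := H ι κ f hfc
  refine ⟨g, hga, hfix, fun y hy => ?_⟩
  obtain ⟨z, hzc, hz⟩ := hg y hy
  obtain ⟨k, hkb, hfk, hk⟩ := h.exists_reflection_of_le1 hbc (Sum.elim f z) (by simp [hfc, hzc])
  have hkf : k ∘ Sum.inl = f := funext fun i => hfk (.inl i) (hf i)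
  refine ⟨k ∘ Sum.inr, fun i => hkb _, ?_⟩
  rw [← hkf, Sum.elim_comp_inl_inr]
  exact hk.symm.trans hz

theorem isSuccPrelimit_of_le1 (h : IsR2Pair le1 le2) (hab : le1 a b) (hlt : a < b) :
    Order.IsSuccPrelimit a := by
  refine Order.isSuccPrelimit_iff_succ_lt.2 fun w hw => ?_
  obtain ⟨g, hga, hfix, hg⟩ := h.exists_reflection_of_le1 hab (fun i : Bool => cond i w a)
    (by simp [hlt, hw.trans hlt])
  have hgw : g true = w := hfix true hw
  have hwg : w < g false := hgw ▸ (hg.lt_iff true false).1 hw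
  exact (Order.succ_le_of_lt hwg).trans_lt (hga false)

theorem le1_of_isSuccPrelimit (h : IsR2Pair le1 le2) (ha : Order.IsSuccPrelimit a) (hx : x < a)
    (hxz : ∀ z, x ≤ z → z < a → le1 x z) : le1 x a := by
  refine h.le1_iff.2 ⟨hx.le, fun ι _ f hf => ?_⟩
  obtain ⟨m, hm, hxm, hfm⟩ := exists_lt_forall_le hx hf
  exact h.exists_reflection_of_le1 (hxz _ (hxm.trans (Order.le_succ m)) (ha.succ_lt hm)) f
    fun i => Order.lt_succ_of_le (hfm i)

theorem exists_reflection_of_le2 (h : IsR2Pair le1 le2) [Finite ι] (hab : le2 a b) (hlt : a < b)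
    (f : ι → Ordinal.{u}) (hf : ∀ i, f i < b) :
    ∃ g : ι → Ordinal.{u}, (∀ i, g i < a) ∧ (∀ i, f i < a → g i = f i) ∧
      SameType le1 le2 f g ∧ ∀ i, le1 (f i) b → le1 (g i) a := by
  obtain ⟨g, hga, hfix, hg⟩ := (h.le2_iff.1 hab).2 ι Unit f hf
  refine ⟨g, hga, hfix, fun i => ?_, fun i hib => ?_⟩
  · obtain ⟨z, -, hz⟩ := hg (fun _ => g i) fun _ => hga i
    exact hz.comp Sum.inl i
  · refine h.le1_of_isSuccPrelimit (h.isSuccPrelimit_of_le1 (h.le1_of_le2 hab) hlt) (hga i)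
      fun y hiy hya => ?_
    obtain ⟨z, hzb, hz⟩ := hg (fun _ => y) fun _ => hya
    have hiz : f i ≤ z () := (hz (.inl i) (.inr ())).1.2 hiy
    exact (hz (.inl i) (.inr ())).2.1.1 (h.le1_respects hiz (hzb ()).le hib)

/-- The witness arises by reflecting `f` below `a` along `a ≤₁ c`, keeping it above the image of
`w`, and then lifting it below `b` along `a ≤₂ b`. -/
theorem exists_lift_of_le2_of_le1 (h : IsR2Pair le1 le2) [Finite ι] {w : Ordinal.{u}}
    (hab : le2 a b) (hac : le1 a c) (hw : w < b) (f : ι → Ordinal.{u}) (hf : ∀ i, f i < c) :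
    ∃ g : ι → Ordinal.{u}, (∀ i, g i < b) ∧ (∀ i, f i < a → g i = f i) ∧
      (∀ i, a ≤ f i → w < g i) ∧ SameType le1 le2 f g := by
  have hle : a ≤ b := (h.le2_iff.1 hab).1
  let p : Option ι → Ordinal.{u} := fun o => o.elim w fun i => if f i < a then f i else w
  have hp : ∀ o, p o < b := by
    rintro (_ | i)
    · exact hw
    · change (if f i < a then f i else w) < b
      split_ifs with hi
      exacts [hi.trans_le hle, hw]
  have hpi i (hi : f i < a) : p (some i) = f i := if_pos hi
  obtain ⟨q, hqa, hpq, hq⟩ := (h.le2_iff.1 hab).2 (Option ι) ι p hp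
  obtain ⟨k, hka, hfk, hk⟩ := h.exists_reflection_of_le1 hac
    (fun o : Option ι => o.elim (q none) f) (by
      rintro (_ | i)
      exacts [(hqa none).trans_le (h.le_of_le1 hac), hf i])
  have hk_none : k none = q none := hfk none (hqa none)
  obtain ⟨z, hzb, hz⟩ := hq (k ∘ some) fun i => hka _
  refine ⟨z, hzb, fun i hi => ?_, fun i hi => ?_, (hk.comp some).trans (hz.symm.comp Sum.inr)⟩
  · have hkq : k (some i) = q (some i) := by
      rw [hfk (some i) hi, hpq (some i) (by rwa [hpi i hi]), hpi i hi]; rfl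
    exact ((hz.eq_iff (.inr i) (.inl (some i))).2 hkq).trans (hpi i hi)
  · have hqk : q none < k (some i) :=
      hk_none ▸ (hk.lt_iff none (some i)).1 ((hqa none).trans_le hi)
    exact (hz.lt_iff (.inl none) (.inr i)).2 hqk

end IsR2Pair

end Segments

section PointwiseComparison

variable {X Y Z : Finset Ordinal.{u}}

theorem pwLE_iff_orderEmbOfFin_le {n : ℕ} (hX : X.card = n) (hY : Y.card = n) :
    pwLE X Y ↔ ∀ i, X.orderEmbOfFin hX i ≤ Y.orderEmbOfFin hY i := by
  subst hX
  exact ⟨fun ⟨_, h⟩ => h, fun h => ⟨hY.symm, h⟩⟩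

theorem pwLE.trans (hXY : pwLE X Y) (hYZ : pwLE Y Z) : pwLE X Z := by
  have hY := hXY.1.symm
  have hZ := hYZ.1.symm.trans hY
  rw [pwLE_iff_orderEmbOfFin_le rfl hY] at hXY
  rw [pwLE_iff_orderEmbOfFin_le hY hZ] at hYZ
  exact (pwLE_iff_orderEmbOfFin_le rfl hZ).2 fun i => (hXY i).trans (hYZ i)

theorem pwLE_image_of_strictMonoOn {φ : Ordinal.{u} → Ordinal.{u}} (hφ : StrictMonoOn φ X)
    (hle : ∀ x ∈ X, x ≤ φ x) : pwLE X (X.image φ) := by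
  have hmem i : X.orderEmbOfFin rfl i ∈ X := X.orderEmbOfFin_mem rfl i
  have henum := Finset.orderEmbOfFin_unique (Finset.card_image_of_injOn hφ.injOn)
    (fun i => Finset.mem_image_of_mem φ (hmem i))
    fun i j hij => hφ (hmem i) (hmem j) ((X.orderEmbOfFin rfl).strictMono hij)
  refine (pwLE_iff_orderEmbOfFin_le rfl (Finset.card_image_of_injOn hφ.injOn)).2 fun i => ?_
  rw [← henum]
  exact hle _ (hmem i)

theorem pwLE_image_image {P : Type*} {s : Finset P} {d c : P → Ordinal.{u}}
    (hdc : ∀ p q, d p ≤ d q ↔ c p ≤ c q) (hle : d ≤ c) : pwLE (s.image d) (s.image c) := by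
  have hfac : c.FactorsThrough d := fun p q hpq =>
    ((hdc p q).1 hpq.le).antisymm ((hdc q p).1 hpq.ge)
  obtain ⟨φ, rfl⟩ := (Function.factorsThrough_iff c).1 hfac
  rw [← Finset.image_image]
  refine pwLE_image_of_strictMonoOn ?_ (Finset.forall_mem_image.2 fun p _ => hle p)
  rw [Finset.coe_image]
  rintro _ ⟨p, -, rfl⟩ _ ⟨q, -, rfl⟩ hpq
  exact not_le.1 ((hdc q p).not.1 hpq.not_ge)

end PointwiseComparison

section Coverings

variable {le1 le2 : Ordinal.{u} → Ordinal.{u} → Prop} {F : RForest} {c : F.P → Ordinal.{u}}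

theorem IsCovering.injective (hc : IsCovering le1 le2 F c) : Function.Injective c := fun p q hpq =>
  F.le0_antisymm p q ((hc.1 p q).2 hpq.le) ((hc.1 q p).2 hpq.ge)

/-- Moving the points `r` of `s` from `c r` down to `g r` keeps all the relations which make `c` a
covering: the type of the moved part is unchanged, and the relations between a point that really
moves and a point outside `s` survive. -/
structure IsLowering (le1 le2 : Ordinal.{u} → Ordinal.{u} → Prop) (F : RForest)
    (c : F.P → Ordinal.{u}) (s : Set F.P) (g : s → Ordinal.{u}) : Prop where
  sameType : SameType le1 le2 (fun r : s => c r) g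
  le : ∀ r, g r ≤ c r
  lt_of_lt : ∀ (r : s) (t : F.P), t ∉ s → g r ≠ c r → c t < c r → c t < g r
  le1_left : ∀ (r : s) (t : F.P), t ∉ s → g r ≠ c r → F.le1 r t → le1 (g r) (c t)
  le1_right : ∀ (r : s) (t : F.P), t ∉ s → g r ≠ c r → F.le1 t r → le1 (c t) (g r)
  le2_left : ∀ (r : s) (t : F.P), t ∉ s → g r ≠ c r → F.le2 r t → le2 (g r) (c t)
  le2_right : ∀ (r : s) (t : F.P), t ∉ s → g r ≠ c r → F.le2 t r → le2 (c t) (g r)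

namespace IsLowering

variable {s : Set F.P} {g : s → Ordinal.{u}}

theorem le_iff_le_right (hc : IsCovering le1 le2 F c) (hg : IsLowering le1 le2 F c s g) (r : s)
    {t : F.P} (ht : t ∉ s) : F.le0 r t ↔ g r ≤ c t := by
  rw [hc.1]
  refine ⟨(hg.le r).trans, fun hrt => not_lt.1 fun htr => ?_⟩
  by_cases hr : g r = c r
  · exact htr.not_ge (hr ▸ hrt)
  · exact (hg.lt_of_lt r t ht hr htr).not_ge hrt

theorem le_iff_le_left (hc : IsCovering le1 le2 F c) (hg : IsLowering le1 le2 F c s g) (r : s)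
    {t : F.P} (ht : t ∉ s) : F.le0 t r ↔ c t ≤ g r := by
  rw [hc.1]
  refine ⟨fun htr => ?_, fun htr => htr.trans (hg.le r)⟩
  by_cases hr : g r = c r
  · exact hr ▸ htr
  · have hne : c t ≠ c r := hc.injective.ne fun h => ht (h ▸ r.2)
    exact (hg.lt_of_lt r t ht hr (htr.lt_of_ne hne)).le

theorem isCovering_extend (hc : IsCovering le1 le2 F c) (hg : IsLowering le1 le2 F c s g) :
    IsCovering le1 le2 F (Function.extend Subtype.val g c) := by
  have hin (r : s) : Function.extend Subtype.val g c r = g r :=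
    Subtype.val_injective.extend_apply g c r
  have hout {t : F.P} (ht : t ∉ s) : Function.extend Subtype.val g c t = c t :=
    Function.extend_apply' _ _ _ fun ⟨r, hr⟩ => ht (hr ▸ r.2)
  suffices H : ∀ p q, (F.le0 p q ↔ _ ≤ _) ∧ (F.le1 p q → le1 _ _) ∧ (F.le2 p q → le2 _ _) from
    ⟨fun p q => (H p q).1, fun p q => (H p q).2.1, fun p q => (H p q).2.2⟩
  intro p q
  by_cases hp : p ∈ s <;> by_cases hq : q ∈ s
  · lift p to s using hp
    lift q to s using hq
    rw [hin, hin]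
    obtain ⟨h0, h1, h2⟩ := hg.sameType p q
    exact ⟨(hc.1 p q).trans h0, fun h => h1.1 (hc.2.1 p q h), fun h => h2.1 (hc.2.2 p q h)⟩
  · lift p to s using hp
    rw [hin, hout hq]
    refine ⟨hg.le_iff_le_right hc p hq, ?_⟩
    by_cases hp' : g p = c p
    · exact hp' ▸ ⟨hc.2.1 p q, hc.2.2 p q⟩
    · exact ⟨hg.le1_left p q hq hp', hg.le2_left p q hq hp'⟩
  · lift q to s using hq
    rw [hin, hout hp]
    refine ⟨hg.le_iff_le_left hc q hp, ?_⟩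
    by_cases hq' : g q = c q
    · exact hq' ▸ ⟨hc.2.1 p q, hc.2.2 p q⟩
    · exact ⟨hg.le1_right q p hp hq', hg.le2_right q p hp hq'⟩
  · rw [hout hp, hout hq]
    exact ⟨hc.1 p q, hc.2.1 p q, hc.2.2 p q⟩

theorem eq_of_minimal (hg : IsLowering le1 le2 F c s g) (hc : Minimal (IsCovering le1 le2 F) c)
    (r : s) : g r = c r := by
  refine (hg.le r).antisymm ?_
  have hle : Function.extend Subtype.val g c ≤ c := by
    intro p
    by_cases hp : p ∈ s
    · exact (Subtype.val_injective.extend_apply g c ⟨p, hp⟩).trans_le (hg.le ⟨p, hp⟩)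
    · exact (Function.extend_apply' _ _ _ fun ⟨r, hr⟩ => hp (hr ▸ r.2)).le
  exact (hc.le_of_le (hg.isCovering_extend hc.prop) hle r).trans_eq
    (Subtype.val_injective.extend_apply g c r)

theorem of_reflection (hc : IsCovering le1 le2 F c) {a : Ordinal.{u}} {q : F.P}
    {g : {r | c r < c q} → Ordinal.{u}} (hga : ∀ r, g r < a)
    (hfix : ∀ r : {r | c r < c q}, c r < a → g r = c r)
    (hg : SameType le1 le2 (fun r : {r | c r < c q} => c r) g)
    (h1 : ∀ (r : {r | c r < c q}) t, a ≤ c r → c q ≤ c t → F.le1 r t → le1 (g r) (c t))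
    (h2 : ∀ (r : {r | c r < c q}) t, a ≤ c r → c q ≤ c t → F.le2 r t → le2 (g r) (c t)) :
    IsLowering le1 le2 F c {r | c r < c q} g := by
  have hmoved {r} (hr : g r ≠ c r) : a ≤ c r := not_lt.1 fun h => hr (hfix r h)
  have hout (r : {r | c r < c q}) {t} (ht : t ∉ {r | c r < c q}) : ¬c t ≤ c r := fun htr =>
    ht (htr.trans_lt r.2)
  have hout1 (r : {r | c r < c q}) {t} (ht : t ∉ {r | c r < c q}) : ¬F.le1 t r := fun htr =>
    hout r ht ((hc.1 _ _).1 (F.le1_sub_le0 _ _ htr))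
  exact
    { sameType := hg
      le := fun r => not_lt.1 fun hr => (hr.trans (hga r)).not_ge (hmoved hr.ne')
      lt_of_lt := fun r t ht _ htr => absurd htr.le (hout r ht)
      le1_left := fun r t ht hr => h1 r t (hmoved hr) (not_lt.1 ht)
      le1_right := fun r t ht _ htr => absurd htr (hout1 r ht)
      le2_left := fun r t ht hr => h2 r t (hmoved hr) (not_lt.1 ht)
      le2_right := fun r t ht _ htr => absurd (F.le2_sub_le1 _ _ htr) (hout1 r ht) }

theorem of_lift (h : IsR2Pair le1 le2) (hc : IsCovering le1 le2 F c) {w : Ordinal.{u}} {p q : F.P}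
    {g : {r | c r < c p ∨ F.le1 q r} → Ordinal.{u}} (hpq : c p < c q)
    (hw : ∀ r, c r < c q → c r ≤ w) (hgq : ∀ r, g r < c q)
    (hfix : ∀ r : {r | c r < c p ∨ F.le1 q r}, c r < c p → g r = c r)
    (hwg : ∀ r : {r | c r < c p ∨ F.le1 q r}, c p ≤ c r → w < g r)
    (hg : SameType le1 le2 (fun r : {r | c r < c p ∨ F.le1 q r} => c r) g)
    (h2 : ∀ u r, c p ≤ c u → c u < c q → F.le1 q r → ¬F.le2 u r) :
    IsLowering le1 le2 F c {r | c r < c p ∨ F.le1 q r} g := by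
  have le_of_le1 {r r'} (hr : F.le1 r r') : c r ≤ c r' := (hc.1 _ _).1 (F.le1_sub_le0 _ _ hr)
  have hmoved {r} (hr : g r ≠ c r) : F.le1 q r := r.2.resolve_left fun h => hr (hfix r h)
  have hout {r u} (hu : ¬(c u < c p ∨ F.le1 q u)) (hr : g r ≠ c r) (hur : c u ≤ c r) :
      c u < c q ∧ c u < g r := by
    have huq : c u < c q := not_le.1 fun hqu =>
      hu (.inr (F.respects1 q u r ((hc.1 _ _).2 hqu) ((hc.1 _ _).2 hur) (hmoved hr)))
    exact ⟨huq, (hw u huq).trans_lt (hwg r (hpq.le.trans (le_of_le1 (hmoved hr))))⟩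
  exact
    { sameType := hg
      le := fun r => by
        by_cases hr : g r = c r
        exacts [hr.le, (hgq r).le.trans (le_of_le1 (hmoved hr))]
      lt_of_lt := fun r u hu hr hur => (hout hu hr hur.le).2
      le1_left := fun r u hu hr hru => absurd (.inr (F.le1_trans _ _ _ (hmoved hr) hru)) hu
      le1_right := fun r u hu hr hur => by
        have huq : F.le1 u q := (F.forest1 r u q hur (hmoved hr)).resolve_right fun h => hu (.inr h)
        exact h.le1_respects (hout hu hr (le_of_le1 hur)).2.le (hgq r).le (hc.2.1 _ _ huq)
      le2_left := fun r u hu hr hru =>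
        absurd (.inr (F.le1_trans _ _ _ (hmoved hr) (F.le2_sub_le1 _ _ hru))) hu
      le2_right := fun r u hu hr hur => absurd hur <|
        h2 u r (not_lt.1 fun h => hu (.inl h))
          (hout hu hr (le_of_le1 (F.le2_sub_le1 _ _ hur))).1 (hmoved hr) }

end IsLowering

variable {p q : F.P}

theorem le1_of_minimal (h : IsR2Pair le1 le2) (hc : Minimal (IsCovering le1 le2 F) c) (p q : F.P)
    (hpq : le1 (c p) (c q)) : F.le1 p q := by
  induction q using (wellFounded_lt.onFun (f := c)).induction with | _ q ih
  by_contra hF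
  have hlt : c p < c q := (h.le_of_le1 hpq).lt_of_ne <|
    hc.prop.injective.ne fun heq => hF (heq ▸ F.le1_refl p)
  obtain ⟨g, hga, hfix, hg⟩ :=
    h.exists_reflection_of_le1 hpq (fun r : {r | c r < c q} => c r) fun r => r.2
  have not_le1 (r : {r | c r < c q}) t (hpr : c p ≤ c r) (hqt : c q ≤ c t) : ¬F.le1 r t := by
    intro hrt
    have hrq : F.le1 r q :=
      F.respects1 r q t ((hc.prop.1 _ _).2 r.2.le) ((hc.prop.1 _ _).2 hqt) hrt
    have hpr' : F.le1 p r := ih r r.2 (h.le1_respects hpr r.2.le hpq)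
    exact hF (F.le1_trans p r q hpr' hrq)
  have hlow : IsLowering le1 le2 F c {r | c r < c q} g := .of_reflection hc.prop hga hfix hg
    (fun r t hpr hqt hrt => absurd hrt (not_le1 r t hpr hqt))
    (fun r t hpr hqt hrt => absurd (F.le2_sub_le1 _ _ hrt) (not_le1 r t hpr hqt))
  exact (hga ⟨p, hlt⟩).ne (hlow.eq_of_minimal hc ⟨p, hlt⟩)

theorem not_le2_of_le1 (h : IsR2Pair le1 le2) (hc : IsCovering le1 le2 F c)
    (hpq : le2 (c p) (c q)) (hF : ¬F.le2 p q)
    (ih : ∀ r, c r < c q → le2 (c p) (c r) → F.le2 p r) {r s : F.P} (hpr : c p ≤ c r)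
    (hrq : c r < c q) (hqs : F.le1 q s) : ¬F.le2 r s := by
  intro hrs
  have hrq' : F.le1 r q := (F.forest1 s r q (F.le2_sub_le1 _ _ hrs) hqs).resolve_right fun hqr =>
    hrq.not_ge ((hc.1 _ _).1 (F.le1_sub_le0 _ _ hqr))
  have hpr' : F.le2 p r := ih r hrq (h.le2_respects hpr (hc.2.1 _ _ hrq') hpq)
  exact hF (F.le2_trans p r q hpr' (F.respects2 r q s hrq' hqs hrs))

theorem exists_le1_not_le1_of_minimal (h : IsR2Pair le1 le2)
    (hc : Minimal (IsCovering le1 le2 F) c) (hpq : le2 (c p) (c q)) (hF : ¬F.le2 p q)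
    (ih : ∀ r, c r < c q → le2 (c p) (c r) → F.le2 p r) :
    ∃ t, c q < c t ∧ F.le1 p t ∧ ¬F.le1 q t := by
  by_contra! hext
  have hpq1 : le1 (c p) (c q) := h.le1_of_le2 hpq
  have hlt : c p < c q := (h.le_of_le1 hpq1).lt_of_ne <|
    hc.prop.injective.ne fun heq => hF (heq ▸ F.le2_refl p)
  obtain ⟨g, hga, hfix, hg, hgp⟩ :=
    h.exists_reflection_of_le2 hpq hlt (fun r : {r | c r < c q} => c r) fun r => r.2
  have le1_of_le1 (r : {r | c r < c q}) t (hpr : c p ≤ c r) (hrt : F.le1 r t) : F.le1 p t :=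
    F.le1_trans p r t (le1_of_minimal h hc p r (h.le1_respects hpr r.2.le hpq1)) hrt
  have hlow : IsLowering le1 le2 F c {r | c r < c q} g := by
    refine .of_reflection hc.prop hga hfix hg (fun r t hpr hqt hrt => ?_)
      fun r t hpr hqt hrt => ?_
    · have hrq : F.le1 r q :=
        F.respects1 r q t ((hc.prop.1 _ _).2 r.2.le) ((hc.prop.1 _ _).2 hqt) hrt
      exact h.le1_trans (hgp r (hc.prop.2.1 _ _ hrq)) (hc.prop.2.1 _ _ (le1_of_le1 r t hpr hrt))
    · have hqt' : F.le1 q t := by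
        obtain heq | hlt := hqt.eq_or_lt
        · exact hc.prop.injective heq ▸ F.le1_refl q
        · exact hext t hlt (le1_of_le1 r t hpr (F.le2_sub_le1 _ _ hrt))
      exact absurd hrt (not_le2_of_le1 h hc.prop hpq hF ih hpr r.2 hqt')
  exact (hga ⟨p, hlt⟩).ne (hlow.eq_of_minimal hc ⟨p, hlt⟩)

theorem le1_of_minimal_of_le2 (h : IsR2Pair le1 le2) (hc : Minimal (IsCovering le1 le2 F) c)
    (hpq : le2 (c p) (c q)) (hF : ¬F.le2 p q)
    (ih : ∀ r, c r < c q → le2 (c p) (c r) → F.le2 p r) {t : F.P} (hqt : c q < c t)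
    (hpt : F.le1 p t) : F.le1 q t := by
  by_contra hnot
  have hlt : c p < c q := (h.le_of_le1 (h.le1_of_le2 hpq)).lt_of_ne <|
    hc.prop.injective.ne fun heq => hF (heq ▸ F.le2_refl p)
  obtain ⟨w, hwq, -, hw⟩ := exists_lt_forall_le hlt fun r : {r // c r < c q} => r.2
  have hbelow (r : {r | c r < c p ∨ F.le1 q r}) : c r < c t := by
    obtain hr | hr := r.2
    · exact hr.trans (hlt.trans hqt)
    · exact not_le.1 fun htr =>
        hnot (F.respects1 q t r ((hc.prop.1 _ _).2 hqt.le) ((hc.prop.1 _ _).2 htr) hr)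
  obtain ⟨g, hgq, hfix, hwg, hg⟩ := h.exists_lift_of_le2_of_le1 hpq (hc.prop.2.1 _ _ hpt) hwq
    (fun r : {r | c r < c p ∨ F.le1 q r} => c r) hbelow
  have hlow : IsLowering le1 le2 F c {r | c r < c p ∨ F.le1 q r} g :=
    .of_lift h hc.prop hlt (fun r hr => hw ⟨r, hr⟩) hgq hfix hwg hg
      fun _ _ => not_le2_of_le1 h hc.prop hpq hF ih
  have hq : c q < c p ∨ F.le1 q q := .inr (F.le1_refl q)
  exact (hgq ⟨q, hq⟩).ne (hlow.eq_of_minimal hc ⟨q, hq⟩)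

theorem le2_of_minimal (h : IsR2Pair le1 le2) (hc : Minimal (IsCovering le1 le2 F) c) (p q : F.P)
    (hpq : le2 (c p) (c q)) : F.le2 p q := by
  induction q using (wellFounded_lt.onFun (f := c)).induction with | _ q ih
  by_contra hF
  obtain ⟨t, hqt, hpt, hnot⟩ := exists_le1_not_le1_of_minimal h hc hpq hF ih
  exact hnot (le1_of_minimal_of_le2 h hc hpq hF ih hqt hpt)

theorem realizes_image_of_minimal (h : IsR2Pair le1 le2) (hc : Minimal (IsCovering le1 le2 F) c) :
    Realizes le1 le2 F (Finset.univ.image c) := by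
  let e : F.P → {x // x ∈ Finset.univ.image c} := fun p =>
    ⟨c p, Finset.mem_image_of_mem c (Finset.mem_univ p)⟩
  have he : Function.Bijective e := by
    refine ⟨fun p q hpq => hc.prop.injective (congrArg Subtype.val hpq), fun ⟨x, hx⟩ => ?_⟩
    obtain ⟨p, -, rfl⟩ := Finset.mem_image.1 hx
    exact ⟨p, rfl⟩
  exact ⟨.ofBijective e he, fun p q => ⟨hc.prop.1 p q,
    ⟨hc.prop.2.1 p q, le1_of_minimal h hc p q⟩, ⟨hc.prop.2.2 p q, le2_of_minimal h hc p q⟩⟩⟩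

theorem IsCovering.exists_realizes_pwLE (h : IsR2Pair le1 le2) (hc : IsCovering le1 le2 F c) :
    ∃ Y, Realizes le1 le2 F Y ∧ pwLE Y (Finset.univ.image c) := by
  obtain ⟨d, hdc, hd⟩ := exists_minimal_le_of_wellFoundedLT (IsCovering le1 le2 F) c hc
  exact ⟨_, realizes_image_of_minimal h hd,
    pwLE_image_image (fun p q => (hd.prop.1 p q).symm.trans (hc.1 p q)) hdc⟩

end Coverings

open scoped Classical in
theorem stmt1 (le1 le2 : Ordinal → Ordinal → Prop) (h : IsR2Pair le1 le2) (F : RForest)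
    (X : Finset Ordinal) (hX : IsIsominimalRealization le1 le2 F X)
    (c : F.P → Ordinal) (hc : IsCovering le1 le2 F c) :
    pwLE X (Finset.univ.image c) := by
  obtain ⟨Y, hY, hYc⟩ := hc.exists_realizes_pwLE h
  exact (hX.2 Y hY).trans hYc
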